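/- Define z₁(q) = 1728·η(q)²⁴ / E₄(q)³. For every real q ∈ (0, e^{−2π}) one has 0 < z₁(q) < 1, and the function φ(q) = F₁(1/2, z₁(q)) / F₁(0, z₁(q)) satisfies (q·d/dq)³ φ(q) = 3√3 · η(q)¹² · E₆(q) / E₄(q)², where (q·d/dq)³ denotes the threefold application of the operator f(q) ↦ q·f′(q). -/

import Mathlib

open Real

/-- The Dedekind eta q-series `η(q) = q^{1/24} · ∏_{n=1}^∞ (1 − qⁿ)`. -/
noncomputable def etaQ (q : ℝ) : ℝ := q ^ ((1 : ℝ) / 24) * ∏' n : ℕ, (1 - q ^ (n + 1))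

/-- `σ₃(n)`, the sum of the cubes of the positive divisors of `n`. -/
def sigma3 (n : ℕ) : ℕ := ∑ d ∈ n.divisors, d ^ 3

/-- `σ₅(n)`, the sum of the fifth powers of the positive divisors of `n`. -/
def sigma5 (n : ℕ) : ℕ := ∑ d ∈ n.divisors, d ^ 5

/-- The Eisenstein series `E₄(q) = 1 + 240·∑_{n=1}^∞ σ₃(n) qⁿ`. -/
noncomputable def E4 (q : ℝ) : ℝ := 1 + 240 * ∑' n : ℕ, (sigma3 (n + 1) : ℝ) * q ^ (n + 1)

/-- The Eisenstein series `E₆(q) = 1 − 504·∑_{n=1}^∞ σ₅(n) qⁿ`. -/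
noncomputable def E6 (q : ℝ) : ℝ := 1 - 504 * ∑' n : ℕ, (sigma5 (n + 1) : ℝ) * q ^ (n + 1)

/-- `F₁(x,z) = ∑_{n=0}^∞ z^{n+x} · (1/2+x)_n (1/6+x)_n (5/6+x)_n / ((1+x)_n)³`. -/
noncomputable def F1 (x z : ℝ) : ℝ :=
  ∑' n : ℕ, z ^ ((n : ℝ) + x) *
    ((ascPochhammer ℝ n).eval (1 / 2 + x) * (ascPochhammer ℝ n).eval (1 / 6 + x) *
      (ascPochhammer ℝ n).eval (5 / 6 + x)) / ((ascPochhammer ℝ n).eval (1 + x)) ^ 3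

/-- `z₁(q) = 1728·η(q)²⁴ / E₄(q)³`. -/
noncomputable def z1 (q : ℝ) : ℝ := 1728 * etaQ q ^ 24 / E4 q ^ 3

/-- The differential operator `f ↦ q·f′(q)`. -/
noncomputable def qDeriv (f : ℝ → ℝ) : ℝ → ℝ := fun q => q * deriv f q


def PolyB (a : ℕ → ℝ) : Prop := ∃ C : ℝ, ∃ m : ℕ, ∀ n, |a n| ≤ C * ((n : ℝ) + 1) ^ m

noncomputable def ps (𝕜 : Type*) [RCLike 𝕜] (a : ℕ → ℝ) (w : 𝕜) : 𝕜 := ∑' n, ((a n : ℝ) : 𝕜) * w ^ n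

lemma polyB_geom_summable (m : ℕ) {r : ℝ} (h0 : 0 < r) (h1 : r < 1) :
    Summable fun n : ℕ => ((n : ℝ) + 1) ^ m * r ^ n := by
  have h := summable_pow_mul_geometric_of_norm_lt_one (R := ℝ) m (r := r)
    (by rw [Real.norm_eq_abs, abs_of_pos h0]; exact h1)
  have h2 := ((summable_nat_add_iff 1).mpr h).mul_left r⁻¹
  refine h2.congr fun n => ?_
  push_cast
  field_simp
  ring

lemma PolyB.nmul {a : ℕ → ℝ} (ha : PolyB a) : PolyB fun n => (n : ℝ) * a n := by
  obtain ⟨C, m, h⟩ := ha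
  refine ⟨C, m + 1, fun n => ?_⟩
  rw [abs_mul, abs_of_nonneg (Nat.cast_nonneg n)]
  have h1 := h n
  have : 0 ≤ C * ((n : ℝ) + 1) ^ m := (abs_nonneg _).trans h1
  calc (n : ℝ) * |a n| ≤ ((n : ℝ) + 1) * (C * ((n : ℝ) + 1) ^ m) := by gcongr; linarith
    _ = _ := by ring

lemma PolyB.add {a b : ℕ → ℝ} (ha : PolyB a) (hb : PolyB b) : PolyB fun n => a n + b n := by
  obtain ⟨C, m, h⟩ := ha
  obtain ⟨C', m', h'⟩ := hb
  have hC : 0 ≤ C := by simpa using (abs_nonneg _).trans (h 0)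
  have hC' : 0 ≤ C' := by simpa using (abs_nonneg _).trans (h' 0)
  refine ⟨C + C', m + m', fun n => ?_⟩
  have h1 : (1 : ℝ) ≤ (n : ℝ) + 1 := by linarith [Nat.cast_nonneg (α := ℝ) n]
  calc |a n + b n| ≤ |a n| + |b n| := abs_add_le _ _
    _ ≤ C * ((n : ℝ) + 1) ^ m + C' * ((n : ℝ) + 1) ^ m' := add_le_add (h n) (h' n)
    _ ≤ C * ((n : ℝ) + 1) ^ (m + m') + C' * ((n : ℝ) + 1) ^ (m + m') := by
      gcongr <;> first | exact h1 | omega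
    _ = _ := by ring

lemma PolyB.cmul {a : ℕ → ℝ} (ha : PolyB a) (c : ℝ) : PolyB fun n => c * a n := by
  obtain ⟨C, m, h⟩ := ha
  refine ⟨|c| * C, m, fun n => ?_⟩
  rw [abs_mul, mul_assoc]
  gcongr
  exact h n

section
variable {𝕜 : Type*} [RCLike 𝕜]

lemma ps_summable {a : ℕ → ℝ} (ha : PolyB a) {w : 𝕜} (hw : ‖w‖ < 1) :
    Summable fun n => ((a n : ℝ) : 𝕜) * w ^ n := by
  obtain ⟨C, m, h⟩ := ha
  obtain ⟨r, hr1, hr2⟩ := exists_between hw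
  have hr0 : 0 < r := (norm_nonneg _).trans_lt hr1
  refine Summable.of_norm_bounded ((polyB_geom_summable m hr0 hr2).mul_left C) fun n => ?_
  rw [norm_mul, norm_pow, RCLike.norm_ofReal, ← mul_assoc]
  gcongr
  · exact (abs_nonneg _).trans (h n)
  · exact h n

lemma ps_nmul_eq {a : ℕ → ℝ} (w : 𝕜) :
    w * ∑' n, ((a n : ℝ) : 𝕜) * ((n : 𝕜) * w ^ (n - 1)) = ps 𝕜 (fun n => (n : ℝ) * a n) w := by
  rw [ps, ← tsum_mul_left]
  congr 1
  ext n
  rcases n with _ | n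
  · simp
  · simp only [Nat.add_sub_cancel]
    push_cast
    ring

lemma ps_hasDerivAt {a : ℕ → ℝ} (ha : PolyB a) {w : 𝕜} (hw : ‖w‖ < 1) :
    HasDerivAt (ps 𝕜 a) (∑' n, ((a n : ℝ) : 𝕜) * ((n : 𝕜) * w ^ (n - 1))) w := by
  obtain ⟨r, hr1, hr2⟩ := exists_between hw
  have hr0 : 0 < r := (norm_nonneg _).trans_lt hr1
  obtain ⟨C, m, h⟩ := ha.nmul
  refine hasDerivAt_tsum_of_isPreconnected
    (g' := fun n y => ((a n : ℝ) : 𝕜) * ((n : 𝕜) * y ^ (n - 1))) (t := Metric.ball (0 : 𝕜) r)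
    (u := fun n : ℕ => r⁻¹ * (C * (((n : ℝ) + 1) ^ m * r ^ n)))
    (g := fun n y => ((a n : ℝ) : 𝕜) * y ^ n) (y₀ := w)
    (((polyB_geom_summable m hr0 hr2).mul_left C).mul_left r⁻¹) Metric.isOpen_ball
    (convex_ball (0 : 𝕜) r).isPreconnected ?_ ?_ (by simpa using hr1) (ps_summable ha hw)
    (by simpa using hr1)
  · intro n y hy
    exact (hasDerivAt_pow n y).const_mul _
  · intro n y hy
    have hy' : ‖y‖ < r := by simpa using hy
    rcases n with _ | n
    · simp
      have := (abs_nonneg _).trans (h 0)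
      simp at this
      positivity
    · have h1 := h (n + 1)
      have h2 : ‖y‖ ^ n ≤ r ^ n := by gcongr
      simp only [Nat.add_sub_cancel, norm_mul, norm_pow, RCLike.norm_ofReal, RCLike.norm_natCast]
      rw [abs_mul, abs_of_nonneg (Nat.cast_nonneg (n+1))] at h1
      calc |a (n + 1)| * (((n + 1 : ℕ) : ℝ) * ‖y‖ ^ n)
          = (((n + 1 : ℕ) : ℝ) * |a (n + 1)|) * ‖y‖ ^ n := by ring
        _ ≤ (C * (((n + 1 : ℕ) : ℝ) + 1) ^ m) * r ^ n :=
          mul_le_mul h1 h2 (by positivity) ((by positivity : (0:ℝ) ≤ _).trans h1)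
        _ = _ := by field_simp; ring

lemma ps_zero (a : ℕ → ℝ) : ps 𝕜 a 0 = (a 0 : ℝ) := by
  rw [ps, tsum_eq_single 0]
  · simp
  · intro n hn; simp [hn]

lemma ps_add {a b : ℕ → ℝ} (ha : PolyB a) (hb : PolyB b) {w : 𝕜} (hw : ‖w‖ < 1) :
    ps 𝕜 (fun n => a n + b n) w = ps 𝕜 a w + ps 𝕜 b w := by
  rw [ps, ps, ps, ← (ps_summable ha hw).tsum_add (ps_summable hb hw)]
  congr 1; ext n; push_cast; ring

lemma ps_cmul {a : ℕ → ℝ} (c : ℝ) {w : 𝕜} :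
    ps 𝕜 (fun n => c * a n) w = c * ps 𝕜 a w := by
  rw [ps, ps, ← tsum_mul_left]
  congr 1; ext n; push_cast; ring
end

lemma ps_ofReal (a : ℕ → ℝ) (q : ℝ) : ((ps ℝ a q : ℝ) : ℂ) = ps ℂ a (q : ℂ) := by
  simp [ps, Complex.ofReal_tsum]

lemma ps_theta {a : ℕ → ℝ} (ha : PolyB a) {q : ℝ} (h0 : 0 < q) (h1 : q < 1) :
    HasDerivAt (ps ℝ a) (ps ℝ (fun n => (n : ℝ) * a n) q / q) q := by
  have := ps_hasDerivAt (𝕜 := ℝ) ha (w := q) (by rwa [Real.norm_eq_abs, abs_of_pos h0])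
  have h2 := ps_nmul_eq (𝕜 := ℝ) (a := a) q
  rw [← h2, mul_div_cancel_left₀ _ h0.ne']
  exact this

lemma ps_tendsto {a : ℕ → ℝ} (ha : PolyB a) {𝕜 : Type*} [RCLike 𝕜] :
    Filter.Tendsto (ps 𝕜 a) (nhds 0) (nhds ((a 0 : ℝ) : 𝕜)) := by
  have := (ps_hasDerivAt (𝕜 := 𝕜) ha (w := 0) (by simp)).continuousAt
  rwa [ContinuousAt, ps_zero] at this

open Real
section Modular
open UpperHalfPlane hiding I
open Complex Derivative ModularForm EisensteinSeries Filter Topology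
open scoped MatrixGroups ModularForm Manifold

noncomputable def a2 (n : ℕ) : ℝ := if n = 0 then 1 else -24 * (ArithmeticFunction.sigma 1 n : ℝ)
noncomputable def a4 (n : ℕ) : ℝ := if n = 0 then 1 else 240 * (ArithmeticFunction.sigma 3 n : ℝ)
noncomputable def a6 (n : ℕ) : ℝ := if n = 0 then 1 else -504 * (ArithmeticFunction.sigma 5 n : ℝ)

lemma polyB_sigma (c : ℝ) (k : ℕ) :
    PolyB fun n => if n = 0 then 1 else c * (ArithmeticFunction.sigma k n : ℝ) := by
  refine ⟨1 + |c|, k + 1, fun n => ?_⟩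
  have h1 : (1 : ℝ) ≤ ((n : ℝ) + 1) ^ (k + 1) :=
    one_le_pow₀ (by linarith [Nat.cast_nonneg (α := ℝ) n])
  by_cases hn : n = 0
  · simp [hn]
  · simp only [hn, if_false]
    have h2 : (ArithmeticFunction.sigma k n : ℝ) ≤ (n : ℝ) ^ (k + 1) := by
      exact_mod_cast ArithmeticFunction.sigma_le_pow_succ k n
    have h3 : (n : ℝ) ^ (k + 1) ≤ ((n : ℝ) + 1) ^ (k + 1) := by gcongr; linarith
    rw [abs_mul, abs_of_nonneg (Nat.cast_nonneg (α := ℝ) (ArithmeticFunction.sigma k n))]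
    have : |c| * (ArithmeticFunction.sigma k n : ℝ) ≤ |c| * ((n : ℝ) + 1) ^ (k + 1) := by
      gcongr; exact h2.trans h3
    nlinarith [abs_nonneg c]

lemma a2_zero : a2 0 = 1 := if_pos rfl
lemma a4_zero : a4 0 = 1 := if_pos rfl
lemma a6_zero : a6 0 = 1 := if_pos rfl
lemma pa2 : PolyB a2 := polyB_sigma (-24) 1
lemma pa4 : PolyB a4 := polyB_sigma 240 3
lemma pa6 : PolyB a6 := polyB_sigma (-504) 5

lemma ps_sigma (c : ℝ) (k : ℕ) {𝕜 : Type*} [RCLike 𝕜] {w : 𝕜} (hw : ‖w‖ < 1) :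
    ps 𝕜 (fun n => if n = 0 then 1 else c * (ArithmeticFunction.sigma k n : ℝ)) w =
      1 + (c : 𝕜) * ∑' n : ℕ, (ArithmeticFunction.sigma k (n + 1) : 𝕜) * w ^ (n + 1) := by
  rw [ps, (ps_summable (polyB_sigma c k) hw).tsum_eq_zero_add]
  simp only [if_true, pow_zero, mul_one, Nat.add_eq_zero_iff, one_ne_zero, and_false, if_false]
  rw [← tsum_mul_left]
  congr 1
  · simp
  · congr 1; ext n; push_cast; ring

noncomputable abbrev qq (τ : ℍ) : ℂ := Function.Periodic.qParam 1 τ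

lemma qq_eq (τ : ℍ) : qq τ = cexp (2 * π * I * τ) := by simp [qq, Function.Periodic.qParam]

lemma qq_norm (τ : ℍ) : ‖qq τ‖ < 1 := by
  rw [qq_eq]; exact UpperHalfPlane.norm_exp_two_pi_I_lt_one τ

lemma E2_ps (τ : ℍ) : EisensteinSeries.E2 τ = ps ℂ a2 (qq τ) := by
  have := ps_sigma (-24) 1 (qq_norm τ)
  change ps ℂ a2 _ = _ at this
  rw [this, E2_eq_tsum_cexp, tsum_pnat_eq_tsum_succ
    (f := fun n ↦ (ArithmeticFunction.sigma 1 n : ℂ) * cexp (2 * π * I * τ) ^ n), qq_eq]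
  push_cast
  ring

lemma E4_ps (τ : ℍ) : E₄ τ = ps ℂ a4 (qq τ) := by
  have := ps_sigma 240 3 (qq_norm τ)
  change ps ℂ a4 _ = _ at this
  have h := q_expansion_bernoulli (by norm_num : 3 ≤ 4) ⟨2, rfl⟩ τ
  simp_rw [zpow_natCast] at h
  rw [this, h, tsum_pnat_eq_tsum_succ
    (f := fun n ↦ (ArithmeticFunction.sigma (4 - 1) n : ℂ) * cexp (2 * π * I * τ) ^ n), qq_eq,
    show bernoulli 4 = -1 / 30 by decide +kernel]
  norm_num

lemma E6_ps (τ : ℍ) : E₆ τ = ps ℂ a6 (qq τ) := by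
  have := ps_sigma (-504) 5 (qq_norm τ)
  change ps ℂ a6 _ = _ at this
  have h := q_expansion_bernoulli (by norm_num : 3 ≤ 6) ⟨3, rfl⟩ τ
  simp_rw [zpow_natCast] at h
  rw [this, h, tsum_pnat_eq_tsum_succ
    (f := fun n ↦ (ArithmeticFunction.sigma (6 - 1) n : ℂ) * cexp (2 * π * I * τ) ^ n), qq_eq,
    show bernoulli 6 = 1 / 42 by decide +kernel]
  norm_num
  ring

lemma D_ps {F : ℍ → ℂ} {a : ℕ → ℝ} (ha : PolyB a) (hF : ∀ τ, F τ = ps ℂ a (qq τ)) (τ : ℍ) :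
    normalizedDerivOfComplex F τ = ps ℂ (fun n => (n : ℝ) * a n) (qq τ) := by
  have h1 : HasDerivAt (fun z : ℂ => cexp (2 * π * I * z)) (cexp (2 * π * I * τ) * (2 * π * I)) τ := by
    have := ((hasDerivAt_id (τ : ℂ)).const_mul (2 * π * I)).cexp
    simpa using this
  have h2 := ps_hasDerivAt (𝕜 := ℂ) ha (w := cexp (2 * π * I * τ)) (by rw [← qq_eq]; exact qq_norm τ)
  have h3 := h2.comp (τ : ℂ) h1
  have h4 : (F ∘ ofComplex) =ᶠ[𝓝 (τ : ℂ)] (ps ℂ a ∘ fun z : ℂ => cexp (2 * π * I * z)) := by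
    filter_upwards [isOpen_upperHalfPlaneSet.mem_nhds τ.im_pos] with w hw
    simp only [Function.comp_apply, hF, qq_eq, ofComplex_apply_of_im_pos hw]
  rw [normalizedDerivOfComplex, (h3.congr_of_eventuallyEq h4).deriv, ← ps_nmul_eq, qq_eq]
  have : (2 * π * I : ℂ) ≠ 0 := two_pi_I_ne_zero
  field_simp

lemma tendsto_ps {F : ℍ → ℂ} {a : ℕ → ℝ} (ha : PolyB a) (hF : ∀ τ, F τ = ps ℂ a (qq τ)) :
    Tendsto F atImInfty (𝓝 ((a 0 : ℝ) : ℂ)) := by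
  have h1 : Tendsto (fun τ : ℍ => qq τ) atImInfty (𝓝 0) :=
    qParam_tendsto_atImInfty one_pos
  have := (ps_tendsto ha (𝕜 := ℂ)).comp h1
  refine this.congr fun τ => (hF τ).symm

lemma eq_zero_of_zeroAtInfty {k : ℤ} (hk : k < 12) {f : ℍ → ℂ} (hf : MDiff f)
    (hs : ∀ γ : SL(2, ℤ), f ∣[k] γ = f) (h0 : Tendsto f atImInfty (𝓝 0)) (τ : ℍ) : f τ = 0 := by
  let g : CuspForm 𝒮ℒ k :=
    { toFun := f
      slash_action_eq' := by
        intro A hA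
        obtain ⟨A, rfl⟩ := hA
        exact hs A
      holo' := hf
      zero_at_cusps' := by
        intro c hc
        rw [Subgroup.IsArithmetic.isCusp_iff_isCusp_SL2Z] at hc
        rw [OnePoint.isZeroAt_iff_forall_SL2Z hc]
        intro γ _
        rw [hs]
        exact h0 }
  have hg : g = 0 := rank_zero_iff_forall_zero.mp (CuspForm.rank_eq_zero_of_weight_lt_twelve hk) g
  have : g τ = 0 := by rw [hg]; rfl
  exact this

lemma ram4 (τ : ℍ) : normalizedDerivOfComplex (E₄ : ℍ → ℂ) τ
    = (EisensteinSeries.E2 τ * E₄ τ - E₆ τ) / 3 := by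
  have hm : MDiff (E₄ : ℍ → ℂ) := E₄.holo'
  have hm6 : MDiff (E₆ : ℍ → ℂ) := E₆.holo'
  have key := eq_zero_of_zeroAtInfty (k := 6) (by norm_num)
    (f := serreDerivative 4 E₄ + (1 / 3 : ℂ) • (E₆ : ℍ → ℂ))
    ((serreDerivative_mdifferentiable 4 hm).add (hm6.const_smul _)) ?_ ?_ τ
  · simp at key
    linear_combination key
  · intro γ
    have h4 := serreDerivative_slash_invariant (k := 4) hm (γ := γ)
      (E₄.slash_action_eq' _ ⟨γ, rfl⟩)
    have h6 : (E₆ : ℍ → ℂ) ∣[(6 : ℤ)] γ = E₆ := E₆.slash_action_eq' _ ⟨γ, rfl⟩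
    rw [SlashAction.add_slash, ModularForm.SL_smul_slash, h6]
    congr 1
  · have t1 := tendsto_ps pa4.nmul (D_ps pa4 E4_ps)
    have t2 := tendsto_ps pa2 E2_ps
    have t4 := tendsto_ps pa4 E4_ps
    have t6 := tendsto_ps pa6 E6_ps
    have := (t1.sub ((t2.const_mul (4 * 12⁻¹ : ℂ)).mul t4)).add (t6.const_mul (1 / 3 : ℂ))
    convert this using 2
    · rfl
    · rw [a2_zero, a4_zero, a6_zero]; norm_num

lemma ram6 (τ : ℍ) : normalizedDerivOfComplex (E₆ : ℍ → ℂ) τ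
    = (EisensteinSeries.E2 τ * E₆ τ - E₄ τ ^ 2) / 2 := by
  have hm : MDiff (E₄ : ℍ → ℂ) := E₄.holo'
  have hm6 : MDiff (E₆ : ℍ → ℂ) := E₆.holo'
  have key := eq_zero_of_zeroAtInfty (k := 8) (by norm_num)
    (f := serreDerivative 6 E₆ + (1 / 2 : ℂ) • ((E₄ : ℍ → ℂ) * (E₄ : ℍ → ℂ)))
    ((serreDerivative_mdifferentiable 6 hm6).add ((hm.mul hm).const_smul _)) ?_ ?_ τ
  · simp at key
    linear_combination key
  · intro γ
    have h6 := serreDerivative_slash_invariant (k := 6) hm6 (γ := γ)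
      (E₆.slash_action_eq' _ ⟨γ, rfl⟩)
    have h4 : (E₄ : ℍ → ℂ) ∣[(4 : ℤ)] γ = E₄ := E₄.slash_action_eq' _ ⟨γ, rfl⟩
    have h44 := ModularForm.mul_slash_SL2 4 4 γ (E₄ : ℍ → ℂ) E₄
    rw [h4] at h44
    rw [SlashAction.add_slash, ModularForm.SL_smul_slash]
    congr 1
    exact congrArg _ h44
  · have t1 := tendsto_ps pa6.nmul (D_ps pa6 E6_ps)
    have t2 := tendsto_ps pa2 E2_ps
    have t4 := tendsto_ps pa4 E4_ps
    have t6 := tendsto_ps pa6 E6_ps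
    have := (t1.sub ((t2.const_mul (6 * 12⁻¹ : ℂ)).mul t6)).add ((t4.mul t4).const_mul (1 / 2 : ℂ))
    convert this using 2
    · rfl
    · rw [a2_zero, a4_zero, a6_zero]; norm_num

lemma E2sq_slash (γ : SL(2, ℤ)) :
    (normalizedDerivOfComplex EisensteinSeries.E2 - (1 / 12 : ℂ) •
      (EisensteinSeries.E2 * EisensteinSeries.E2)) ∣[(4 : ℤ)] γ =
    (normalizedDerivOfComplex EisensteinSeries.E2 - (1 / 12 : ℂ) •
      (EisensteinSeries.E2 * EisensteinSeries.E2)) := by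
  have hm := E2_mdifferentiable
  have h1 := normalizedDerivOfComplex_SL_slash (k := 2) hm (γ := γ)
  have h2 := E2_slash_action γ
  have h3 := ModularForm.mul_slash_SL2 2 2 γ EisensteinSeries.E2 EisensteinSeries.E2
  have hder : ∀ τ : ℍ, HasDerivAt (EisensteinSeries.D2 γ ∘ ofComplex)
      (- (2 * π * I) * (γ 1 0 / denom γ τ) ^ 2) τ := by
    intro τ
    have hz := denom_ne_zero γ τ
    have hd : HasDerivAt (fun w : ℂ => 2 * π * I * γ 1 0 * (denom γ w) ^ (-1 : ℤ))
        (2 * π * I * γ 1 0 * (-1 * (γ 1 0 : ℂ) * (denom γ τ) ^ (-1 - 1 : ℤ))) ↑τ := by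
      have := (hasDerivAt_denom_zpow γ (-1) τ).const_mul (2 * π * I * γ 1 0 : ℂ)
      simpa using this
    have hE : (EisensteinSeries.D2 γ ∘ ofComplex) =ᶠ[𝓝 (τ : ℂ)]
        fun w : ℂ => 2 * π * I * γ 1 0 * (denom γ w) ^ (-1 : ℤ) := by
      filter_upwards [isOpen_upperHalfPlaneSet.mem_nhds τ.im_pos] with w hw
      simp only [Function.comp_apply, EisensteinSeries.D2, ofComplex_apply_of_im_pos hw]
      rw [zpow_neg_one, div_eq_mul_inv]
    have hv : (- (2 * π * I) * (γ 1 0 / denom γ τ) ^ 2 : ℂ) =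
        2 * π * I * γ 1 0 * (-1 * (γ 1 0 : ℂ) * (denom γ τ) ^ (-1 - 1 : ℤ)) := by
      rw [show (-1 - 1 : ℤ) = -(2 : ℕ) by norm_num, zpow_neg, zpow_natCast, div_pow]
      field_simp
    rw [hv]
    exact hd.congr_of_eventuallyEq hE
  have hD2 : MDiff (EisensteinSeries.D2 γ) := fun τ =>
    UpperHalfPlane.mdifferentiableAt_iff.mpr (hder τ).differentiableAt
  have hDD2 : ∀ τ, normalizedDerivOfComplex (EisensteinSeries.D2 γ) τ =
      - (γ 1 0 / denom γ τ) ^ 2 := by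
    intro τ
    rw [normalizedDerivOfComplex, (hder τ).deriv]
    have : (2 * π * I : ℂ) ≠ 0 := two_pi_I_ne_zero
    field_simp
  rw [h2, normalizedDerivOfComplex_sub _ _ hm (hD2.const_smul _),
    normalizedDerivOfComplex_smul _ _ hD2] at h1
  rw [h2] at h3
  ext τ
  have h1' := congrFun h1 τ
  have h3' := congrFun h3 τ
  rw [sub_eq_add_neg, SlashAction.add_slash, SlashAction.neg_slash, ModularForm.SL_smul_slash]
  simp only [Pi.sub_apply, Pi.smul_apply, Pi.add_apply, Pi.neg_apply, Pi.mul_apply, smul_eq_mul,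
    hDD2] at h1' h3' ⊢
  norm_num at h1' h3' ⊢
  rw [h3']
  simp only [EisensteinSeries.D2, riemannZeta_two] at h1' ⊢
  have hpi : (π : ℂ) ≠ 0 := by exact_mod_cast Real.pi_ne_zero
  have hz := denom_ne_zero γ τ
  generalize (normalizedDerivOfComplex EisensteinSeries.E2 ∣[(4 : ℤ)] γ) τ = X at *
  generalize normalizedDerivOfComplex EisensteinSeries.E2 τ = Y at *
  generalize EisensteinSeries.E2 τ = E at *
  generalize denom γ τ = d at *
  generalize ((γ 1 0 : ℤ) : ℂ) = c at *
  clear h1 h3 h2 hder hDD2 hm hD2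
  have hI := I_sq
  have hI0 := I_ne_zero
  rw [mul_div_assoc (2 * π * I : ℂ)] at h1' ⊢
  generalize c / d = u at *
  have hk : (π : ℂ) * (π : ℂ)⁻¹ = 1 := mul_inv_cancel₀ hpi
  have e1 : ((π : ℂ) ^ 2 / 6)⁻¹ * (1 / 2) = 3 * (π : ℂ)⁻¹ ^ 2 := by field_simp; norm_num
  have e2 : ((π : ℂ) ^ 2 / 6)⁻¹ * (1 / 2) * (2 * π * I * u) = 6 * (π : ℂ)⁻¹ * I * u := by
    field_simp
  rw [e2, e1] at h1'
  rw [e2]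
  generalize (π : ℂ)⁻¹ = k at *
  linear_combination -h1' + 3 * k ^ 2 * u ^ 2 * hI

lemma ram2 (τ : ℍ) : normalizedDerivOfComplex EisensteinSeries.E2 τ
    = (EisensteinSeries.E2 τ ^ 2 - E₄ τ) / 12 := by
  have hm : MDiff (E₄ : ℍ → ℂ) := E₄.holo'
  have hm2 := E2_mdifferentiable
  have key := eq_zero_of_zeroAtInfty (k := 4) (by norm_num)
    (f := (normalizedDerivOfComplex EisensteinSeries.E2 - (1 / 12 : ℂ) •
      (EisensteinSeries.E2 * EisensteinSeries.E2)) + (1 / 12 : ℂ) • (E₄ : ℍ → ℂ))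
    (((normalizedDerivOfComplex_mdifferentiable hm2).sub ((hm2.mul hm2).const_smul _)).add
      (hm.const_smul _)) ?_ ?_ τ
  · simp at key
    linear_combination key
  · intro γ
    have h4 : (E₄ : ℍ → ℂ) ∣[(4 : ℤ)] γ = E₄ := E₄.slash_action_eq' _ ⟨γ, rfl⟩
    rw [SlashAction.add_slash, ModularForm.SL_smul_slash, h4, E2sq_slash]
  · have t1 := tendsto_ps pa2.nmul (D_ps pa2 E2_ps)
    have t2 := tendsto_ps pa2 E2_ps
    have t4 := tendsto_ps pa4 E4_ps
    have := (t1.sub ((t2.mul t2).const_mul (1 / 12 : ℂ))).add (t4.const_mul (1 / 12 : ℂ))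
    convert this using 2
    · rfl
    · rw [a2_zero, a4_zero]; norm_num
end Modular

open Real
section Transfer
open UpperHalfPlane hiding I
open Complex Derivative ModularForm EisensteinSeries Filter Topology
open scoped MatrixGroups ModularForm Manifold

noncomputable def tauOf (q : ℝ) (h0 : 0 < q) (h1 : q < 1) : ℍ :=
  ⟨I * ((-Real.log q / (2 * π) : ℝ) : ℂ), by
    have := Real.log_neg h0 h1
    have h2 : 0 < -Real.log q / (2 * π) := by
      apply div_pos (by linarith) (by positivity)
    rw [Complex.I_mul_im, Complex.ofReal_re]; exact h2⟩

lemma qq_tauOf (q : ℝ) (h0 : 0 < q) (h1 : q < 1) : qq (tauOf q h0 h1) = (q : ℂ) := by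
  rw [qq_eq]
  have : (2 * π * I * (tauOf q h0 h1 : ℂ)) = ((Real.log q : ℝ) : ℂ) := by
    change 2 * π * I * (I * ((-Real.log q / (2 * π) : ℝ) : ℂ)) = _
    have hpi : (π : ℂ) ≠ 0 := by exact_mod_cast Real.pi_ne_zero
    push_cast
    field_simp
    linear_combination (- ((Real.log q : ℝ) : ℂ)) * I_sq
  rw [this, ← Complex.ofReal_exp, Real.exp_log h0]

lemma sigma3_eq (n : ℕ) : sigma3 n = ArithmeticFunction.sigma 3 n := by
  rw [sigma3, ArithmeticFunction.sigma_apply]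

lemma sigma5_eq (n : ℕ) : sigma5 n = ArithmeticFunction.sigma 5 n := by
  rw [sigma5, ArithmeticFunction.sigma_apply]

lemma E4_eq {q : ℝ} (h0 : 0 < q) (h1 : q < 1) : E4 q = ps ℝ a4 q := by
  have := ps_sigma 240 3 (𝕜 := ℝ) (w := q) (by rwa [Real.norm_eq_abs, abs_of_pos h0])
  change ps ℝ a4 _ = _ at this
  rw [this, E4]
  simp only [sigma3_eq]
  rfl

lemma E6_eq {q : ℝ} (h0 : 0 < q) (h1 : q < 1) : E6 q = ps ℝ a6 q := by
  have := ps_sigma (-504) 5 (𝕜 := ℝ) (w := q) (by rwa [Real.norm_eq_abs, abs_of_pos h0])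
  change ps ℝ a6 _ = _ at this
  rw [this, E6]
  simp only [sigma5_eq]
  simp
  ring

noncomputable def E2r (q : ℝ) : ℝ := ps ℝ a2 q

lemma ramr2 {q : ℝ} (h0 : 0 < q) (h1 : q < 1) :
    HasDerivAt E2r ((E2r q ^ 2 - E4 q) / 12 / q) q := by
  have h := ps_theta pa2 h0 h1
  have hr := ram2 (tauOf q h0 h1)
  rw [D_ps pa2 E2_ps, E2_ps, E4_ps, qq_tauOf, ← ps_ofReal, ← ps_ofReal, ← ps_ofReal] at hr
  have hr' : ps ℝ (fun n => (n : ℝ) * a2 n) q = (ps ℝ a2 q ^ 2 - ps ℝ a4 q) / 12 := by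
    exact_mod_cast hr
  rw [hr', ← E4_eq h0 h1] at h
  exact h

lemma E4_ev {q : ℝ} (h0 : 0 < q) (h1 : q < 1) : E4 =ᶠ[𝓝 q] ps ℝ a4 := by
  filter_upwards [Ioo_mem_nhds h0 h1] with t ht using E4_eq ht.1 ht.2

lemma E6_ev {q : ℝ} (h0 : 0 < q) (h1 : q < 1) : E6 =ᶠ[𝓝 q] ps ℝ a6 := by
  filter_upwards [Ioo_mem_nhds h0 h1] with t ht using E6_eq ht.1 ht.2

lemma ramr4 {q : ℝ} (h0 : 0 < q) (h1 : q < 1) :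
    HasDerivAt E4 ((E2r q * E4 q - E6 q) / 3 / q) q := by
  have h := ps_theta pa4 h0 h1
  have hr := ram4 (tauOf q h0 h1)
  rw [D_ps pa4 E4_ps, E2_ps, E4_ps, E6_ps, qq_tauOf, ← ps_ofReal, ← ps_ofReal, ← ps_ofReal,
    ← ps_ofReal] at hr
  have hr' : ps ℝ (fun n => (n : ℝ) * a4 n) q = (ps ℝ a2 q * ps ℝ a4 q - ps ℝ a6 q) / 3 := by
    exact_mod_cast hr
  rw [hr', ← E4_eq h0 h1, ← E6_eq h0 h1] at h
  exact h.congr_of_eventuallyEq (E4_ev h0 h1)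

lemma ramr6 {q : ℝ} (h0 : 0 < q) (h1 : q < 1) :
    HasDerivAt E6 ((E2r q * E6 q - E4 q ^ 2) / 2 / q) q := by
  have h := ps_theta pa6 h0 h1
  have hr := ram6 (tauOf q h0 h1)
  rw [D_ps pa6 E6_ps, E2_ps, E4_ps, E6_ps, qq_tauOf, ← ps_ofReal, ← ps_ofReal, ← ps_ofReal,
    ← ps_ofReal] at hr
  have hr' : ps ℝ (fun n => (n : ℝ) * a6 n) q = (ps ℝ a2 q * ps ℝ a6 q - ps ℝ a4 q ^ 2) / 2 := by
    exact_mod_cast hr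
  rw [hr', ← E4_eq h0 h1, ← E6_eq h0 h1] at h
  exact h.congr_of_eventuallyEq (E6_ev h0 h1)

lemma summ_real {q : ℝ} (h0 : 0 < q) (h1 : q < 1) : Summable fun n : ℕ => ‖-q ^ (n + 1)‖ := by
  have := (summable_nat_add_iff 1).mpr (summable_geometric_of_lt_one h0.le h1)
  refine this.congr fun n => ?_
  rw [norm_neg, norm_pow, Real.norm_eq_abs, abs_of_pos h0]

lemma mult_real {q : ℝ} (h0 : 0 < q) (h1 : q < 1) :
    Multipliable fun n : ℕ => (1 - q ^ (n + 1)) := by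
  have := multipliable_one_add_of_summable (summ_real h0 h1)
  simpa [sub_eq_add_neg] using this

lemma etaQ_pos {q : ℝ} (h0 : 0 < q) (h1 : q < 1) : 0 < etaQ q := by
  rw [etaQ]
  refine mul_pos (Real.rpow_pos_of_pos h0 _) ?_
  have hlt : ∀ n : ℕ, q ^ (n + 1) < 1 := fun n => pow_lt_one₀ h0.le h1 (by omega)
  refine lt_of_le_of_ne ?_ (Ne.symm ?_)
  · refine ge_of_tendsto' (mult_real h0 h1).hasProd fun s => ?_
    exact Finset.prod_nonneg fun n _ => by linarith [hlt n]
  · have := tprod_one_add_ne_zero_of_summable (f := fun n : ℕ => -q ^ (n + 1))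
      (fun n => by have := hlt n; intro h; linarith) (summ_real h0 h1)
    simpa [sub_eq_add_neg] using this

lemma disc_real {q : ℝ} (h0 : 0 < q) (h1 : q < 1) :
    1728 * etaQ q ^ 24 = E4 q ^ 3 - E6 q ^ 2 := by
  have h := discriminant_eq_E₄_cube_sub_E₆_sq (tauOf q h0 h1)
  have he : ModularForm.discriminant (tauOf q h0 h1) = ((etaQ q ^ 24 : ℝ) : ℂ) := by
    have e1 : ((∏' n : ℕ, (1 - q ^ (n + 1)) : ℝ) : ℂ) = ∏' n : ℕ, (1 - (q : ℂ) ^ (n + 1)) := by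
      have := (mult_real h0 h1).map_tprod Complex.ofRealHom Complex.continuous_ofReal
      simpa using this
    have e2 : (q ^ ((1 : ℝ) / 24)) ^ 24 = q := by
      rw [← Real.rpow_natCast, ← Real.rpow_mul h0.le]; norm_num
    have e3 : (Function.Periodic.qParam 24 (tauOf q h0 h1 : ℂ)) ^ 24 = (q : ℂ) := by
      rw [← qq_tauOf q h0 h1, qq_eq, Function.Periodic.qParam, ← Complex.exp_nat_mul]
      congr 1
      push_cast
      field_simp
    rw [ModularForm.discriminant, ModularForm.eta, mul_pow, e3, etaQ, mul_pow, e2]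
    push_cast
    have e4 : ∀ n, eta_q n (tauOf q h0 h1 : ℂ) = (q : ℂ) ^ (n + 1) := fun n => by
      rw [← qq_tauOf q h0 h1]
    simp only [e4]
    rw [e1]
  rw [he, E4_ps, E6_ps, qq_tauOf, ← ps_ofReal, ← ps_ofReal] at h
  have h' : etaQ q ^ 24 = (ps ℝ a4 q ^ 3 - ps ℝ a6 q ^ 2) / 1728 := by exact_mod_cast h
  rw [h', E4_eq h0 h1, E6_eq h0 h1]
  ring

lemma q0_lt_one : Real.exp (-2 * π) < 1 := by
  rw [Real.exp_lt_one_iff]; linarith [Real.pi_pos]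

lemma E6_q0 : E6 (Real.exp (-2 * π)) = 0 := by
  have h0 := Real.exp_pos (-2 * π)
  have h1 := q0_lt_one
  have ht : tauOf _ h0 h1 = UpperHalfPlane.I := by
    ext
    change I * ((-Real.log (Real.exp (-2 * π)) / (2 * π) : ℝ) : ℂ) = I
    rw [Real.log_exp]
    have : (-(-2 * π) / (2 * π) : ℝ) = 1 := by field_simp
    rw [this]; simp
  have hs : (E₆ : ℍ → ℂ) ∣[(6 : ℤ)] ModularGroup.S = E₆ := E₆.slash_action_eq' _ ⟨_, rfl⟩
  have h := congrFun hs UpperHalfPlane.I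
  rw [ModularForm.SL_slash_apply] at h
  have hS : ModularGroup.S • UpperHalfPlane.I = UpperHalfPlane.I := by
    rw [UpperHalfPlane.modular_S_smul]
    ext
    simp
  have hd : denom ModularGroup.S UpperHalfPlane.I = I := by
    rw [ModularGroup.denom_apply]; simp [ModularGroup.S]
  rw [hS, hd] at h
  have hI : (I : ℂ) ^ (-6 : ℤ) = -1 := by
    rw [zpow_neg]
    norm_cast
    rw [show (6 : ℕ) = 2 * 3 by norm_num, pow_mul, I_sq]
    norm_num
  rw [hI] at h
  have h3 : (E₆ UpperHalfPlane.I : ℂ) = 0 := by linear_combination (-1 / 2) * h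
  rw [← ht, E6_ps, qq_tauOf, ← ps_ofReal] at h3
  rw [E6_eq h0 h1]
  exact_mod_cast h3

lemma E6_pos {q : ℝ} (h0 : 0 < q) (h1 : q < Real.exp (-2 * π)) : 0 < E6 q := by
  rw [← E6_q0, E6, E6]
  have hs : ∀ t : ℝ, 0 < t → t < 1 → Summable fun n : ℕ => (sigma5 (n + 1) : ℝ) * t ^ (n + 1) := by
    intro t ht ht1
    have := (summable_nat_add_iff 1).mpr (ps_summable (𝕜 := ℝ) pa6 (w := t)
      (by rwa [Real.norm_eq_abs, abs_of_pos ht]))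
    refine (this.mul_left (-1 / 504)).congr fun n => ?_
    simp [a6, sigma5_eq]
    ring
  have hlt : ∑' n : ℕ, (sigma5 (n + 1) : ℝ) * q ^ (n + 1) <
      ∑' n : ℕ, (sigma5 (n + 1) : ℝ) * (Real.exp (-2 * π)) ^ (n + 1) := by
    refine Summable.tsum_lt_tsum (i := 0) (fun n => ?_) ?_ (hs q h0 (h1.trans q0_lt_one))
      (hs _ (Real.exp_pos _) q0_lt_one)
    · gcongr
    · simpa [sigma5] using h1
  linarith

lemma E4_pos {q : ℝ} (h0 : 0 < q) : 0 < E4 q := by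
  rw [E4]
  have : 0 ≤ ∑' n : ℕ, (sigma3 (n + 1) : ℝ) * q ^ (n + 1) := tsum_nonneg fun n => by positivity
  linarith
end Transfer

open Real
section Hyp
open Filter Topology

noncomputable def cf (x : ℝ) (n : ℕ) : ℝ :=
  ((ascPochhammer ℝ n).eval (1 / 2 + x) * (ascPochhammer ℝ n).eval (1 / 6 + x) *
      (ascPochhammer ℝ n).eval (5 / 6 + x)) / ((ascPochhammer ℝ n).eval (1 + x)) ^ 3

noncomputable def hk (x : ℝ) (k n : ℕ) : ℝ := ((n : ℝ) + x) ^ k * cf x n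

noncomputable def fk (x : ℝ) (k : ℕ) (z : ℝ) : ℝ := z ^ x * ps ℝ (hk x k) z

lemma cf_zero (x : ℝ) : cf x 0 = 1 := by simp [cf]

lemma cf_succ {x : ℝ} (hx : 0 ≤ x) (n : ℕ) :
    cf x (n + 1) = cf x n * (((1 / 2 + x + n) * (1 / 6 + x + n) * (5 / 6 + x + n)) /
      (1 + x + n) ^ 3) := by
  rw [cf, cf, div_mul_div_comm]
  simp only [ascPochhammer_succ_eval]
  congr 1 <;> ring

lemma cf_bound {x : ℝ} (hx : 0 ≤ x) (n : ℕ) : 0 ≤ cf x n ∧ cf x n ≤ 1 := by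
  induction n with
  | zero => simp [cf_zero]
  | succ n ih =>
    rw [cf_succ hx]
    have hn : (0 : ℝ) ≤ n := Nat.cast_nonneg n
    refine ⟨mul_nonneg ih.1 (by positivity), mul_le_one₀ ih.2 (by positivity) ?_⟩
    rw [div_le_one (by positivity), show (1 + x + n) ^ 3 = (1 + x + n) * (1 + x + n) * (1 + x + n) by ring]
    gcongr <;> norm_num

lemma phk0 {x : ℝ} (hx : 0 ≤ x) : PolyB (cf x) := by
  refine ⟨1, 0, fun n => ?_⟩
  obtain ⟨h1, h2⟩ := cf_bound hx n
  rw [abs_of_nonneg h1]; simpa using h2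

lemma hk_succ (x : ℝ) (k : ℕ) : hk x (k + 1) = fun n : ℕ => (n : ℝ) * hk x k n + x * hk x k n := by
  ext n; simp only [hk]; ring

lemma phk {x : ℝ} (hx : 0 ≤ x) (k : ℕ) : PolyB (hk x k) := by
  induction k with
  | zero =>
    have : hk x 0 = cf x := by ext n; simp [hk]
    rw [this]; exact phk0 hx
  | succ k ih => rw [hk_succ]; exact ih.nmul.add (ih.cmul x)

lemma F1_eq {x z : ℝ} (hz : 0 < z) : F1 x z = fk x 0 z := by
  rw [F1, fk, ps, ← tsum_mul_left]
  congr 1; ext n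
  rw [Real.rpow_add hz, Real.rpow_natCast]
  simp only [hk, cf, pow_zero, one_mul, RCLike.ofReal_real_eq_id, id]
  ring

lemma fk_deriv {x z : ℝ} (hx : 0 ≤ x) (h0 : 0 < z) (h1 : z < 1) (k : ℕ) :
    HasDerivAt (fk x k) (fk x (k + 1) z / z) z := by
  have d1 := Real.hasDerivAt_rpow_const (x := z) (p := x) (Or.inl h0.ne')
  have d2 := ps_theta (phk hx k) h0 h1
  have hn : ‖z‖ < 1 := by rwa [Real.norm_eq_abs, abs_of_pos h0]
  have d := d1.mul d2
  have e : fk x (k + 1) z / z = x * z ^ (x - 1) * ps ℝ (hk x k) z +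
      z ^ x * (ps ℝ (fun n => (n : ℝ) * hk x k n) z / z) := by
    rw [fk, hk_succ, ps_add (phk hx k).nmul ((phk hx k).cmul x) hn, ps_cmul,
      Real.rpow_sub_one h0.ne']
    simp only [RCLike.ofReal_real_eq_id, id]
    field_simp
    ring
  rw [e]
  exact d

lemma fk_ode {x z : ℝ} (hx : 0 ≤ x) (h0 : 0 < z) (h1 : z < 1) :
    fk x 3 z - z * (fk x 3 z + 3 / 2 * fk x 2 z + 23 / 36 * fk x 1 z + 5 / 72 * fk x 0 z) =
      x ^ 3 * z ^ x := by
  have hn : ‖z‖ < 1 := by rwa [Real.norm_eq_abs, abs_of_pos h0]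
  have hs := fun k => (ps_summable (𝕜 := ℝ) (phk hx k) hn).hasSum
  have h := ((((hs 3).add ((hs 2).mul_left (3 / 2))).add ((hs 1).mul_left (23 / 36))).add
    ((hs 0).mul_left (5 / 72))).mul_left z
  have h3 := (hasSum_nat_add_iff' 1).mpr (hs 3)
  have e : (fun n : ℕ => ((hk x 3 (n + 1) : ℝ) : ℝ) * z ^ (n + 1)) = fun n : ℕ =>
      z * (hk x 3 n * z ^ n + 3 / 2 * (hk x 2 n * z ^ n) + 23 / 36 * (hk x 1 n * z ^ n) +
        5 / 72 * (hk x 0 n * z ^ n)) := by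
    ext n
    simp only [hk, cf_succ hx]
    have : (1 + x + n) ≠ 0 := by positivity
    push_cast
    rw [show ((n : ℝ) + 1 + x) = 1 + x + n by ring]
    field_simp
    ring
  have h3' : HasSum (fun n : ℕ => ((hk x 3 (n + 1) : ℝ) : ℝ) * z ^ (n + 1)) _ := h3
  rw [e] at h3'
  have key := h3'.unique h
  simp only [Finset.range_one, Finset.sum_singleton, pow_zero, mul_one] at key
  have k0 : hk x 3 0 = x ^ 3 := by simp [hk, cf_zero]
  simp only [RCLike.ofReal_real_eq_id, id, k0] at key
  simp only [fk, ps, RCLike.ofReal_real_eq_id, id]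
  linear_combination z ^ x * key

lemma z1_eq {q : ℝ} (h0 : 0 < q) (h1 : q < 1) : z1 q = 1 - E6 q ^ 2 / E4 q ^ 3 := by
  have := E4_pos h0
  rw [z1, disc_real h0 h1]
  field_simp

noncomputable def U : Set ℝ := Set.Ioo (0 : ℝ) (Real.exp (-2 * π))

lemma z1_bounds {q : ℝ} (hq : q ∈ U) : 0 < z1 q ∧ z1 q < 1 := by
  have h1 := hq.2.trans q0_lt_one
  have hE := E4_pos hq.1
  have hE6 := E6_pos hq.1 hq.2
  constructor
  · rw [z1]; have := etaQ_pos hq.1 h1; positivity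
  · rw [z1_eq hq.1 h1]
    have : 0 < E6 q ^ 2 / E4 q ^ 3 := by positivity
    linarith

noncomputable def rho (q : ℝ) : ℝ := E6 q / E4 q
noncomputable def ss (q : ℝ) : ℝ := (√(E4 q))⁻¹

lemma z1_deriv {q : ℝ} (h0 : 0 < q) (h1 : q < 1) : HasDerivAt z1 (z1 q * rho q / q) q := by
  have hE := E4_pos h0
  have d := (((ramr6 h0 h1).pow 2).div ((ramr4 h0 h1).pow 3) (by simp [hE.ne'])).const_sub 1
  have e : z1 =ᶠ[𝓝 q] fun t => 1 - (E6 t ^ 2 / E4 t ^ 3) := by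
    filter_upwards [Ioo_mem_nhds h0 h1] with t ht using z1_eq ht.1 ht.2
  have d' := HasDerivAt.congr_of_eventuallyEq d e
  refine d'.congr_deriv ?_
  simp only [Pi.pow_apply]
  rw [z1_eq h0 h1, rho]
  field_simp
  ring

lemma rho_deriv {q : ℝ} (h0 : 0 < q) (h1 : q < 1) :
    HasDerivAt rho ((E2r q * rho q / 6 - E4 q / 2 + rho q ^ 2 / 3) / q) q := by
  have hE := E4_pos h0
  have d := (ramr6 h0 h1).div (ramr4 h0 h1) hE.ne'
  refine HasDerivAt.congr_deriv (f := rho) d ?_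
  rw [rho]
  field_simp
  ring

lemma ss_deriv {q : ℝ} (h0 : 0 < q) (h1 : q < 1) :
    HasDerivAt ss (-(ss q * (E2r q - rho q) / 6) / q) q := by
  have hE := E4_pos h0
  have hs : 0 < √(E4 q) := Real.sqrt_pos.mpr hE
  have d := ((ramr4 h0 h1).sqrt hE.ne').inv hs.ne'
  refine HasDerivAt.congr_deriv (f := ss) d ?_
  rw [rho, ss]
  have h2 : √(E4 q) ^ 2 = E4 q := Real.sq_sqrt hE.le
  rw [h2]
  field_simp
  ring

noncomputable def uu (x : ℝ) (k : ℕ) (q : ℝ) : ℝ := fk x k (z1 q)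

lemma uu_deriv {x : ℝ} (hx : 0 ≤ x) {q : ℝ} (hq : q ∈ U) (k : ℕ) :
    HasDerivAt (uu x k) (uu x (k + 1) q * rho q / q) q := by
  obtain ⟨b0, b1⟩ := z1_bounds hq
  have d := (fk_deriv hx b0 b1 k).comp q (z1_deriv hq.1 (hq.2.trans q0_lt_one))
  refine HasDerivAt.congr_deriv (f := uu x k) d ?_
  rw [uu]
  field_simp

noncomputable def V0 (x q : ℝ) : ℝ := ss q * uu x 0 q
noncomputable def V1 (x q : ℝ) : ℝ := ss q * (uu x 1 q * rho q - (E2r q - rho q) / 6 * uu x 0 q)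
noncomputable def V2 (x q : ℝ) : ℝ := ss q * (uu x 2 q * rho q ^ 2 +
  uu x 1 q * (-(E2r q * rho q) / 6 - E4 q / 2 + 2 / 3 * rho q ^ 2) +
  uu x 0 q * (E2r q ^ 2 / 72 - E2r q * rho q / 36 + rho q ^ 2 / 12 - 5 / 72 * E4 q))
noncomputable def V3 (x q : ℝ) : ℝ := ss q * E6 q * (x ^ 3 * z1 q ^ x)

lemma V0_deriv {x : ℝ} (hx : 0 ≤ x) {q : ℝ} (hq : q ∈ U) : HasDerivAt (V0 x) (V1 x q / q) q := by
  have h1 := hq.2.trans q0_lt_one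
  have h0 := hq.1
  have d := (ss_deriv h0 h1).mul (uu_deriv hx hq 0)
  refine HasDerivAt.congr_deriv (f := V0 x) d ?_
  rw [V1]; ring

lemma V1_deriv {x : ℝ} (hx : 0 ≤ x) {q : ℝ} (hq : q ∈ U) : HasDerivAt (V1 x) (V2 x q / q) q := by
  have h1 := hq.2.trans q0_lt_one
  have h0 := hq.1
  have d := (ss_deriv h0 h1).mul (((uu_deriv hx hq 1).mul (rho_deriv h0 h1)).sub
    ((((ramr2 h0 h1).sub (rho_deriv h0 h1)).div_const 6).mul (uu_deriv hx hq 0)))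
  refine HasDerivAt.congr_deriv (f := V1 x) d ?_
  simp only [Pi.mul_apply, Pi.sub_apply]
  rw [V2]; ring

lemma V2_deriv {x : ℝ} (hx : 0 ≤ x) {q : ℝ} (hq : q ∈ U) : HasDerivAt (V2 x) (V3 x q / q) q := by
  have h1 := hq.2.trans q0_lt_one
  have h0 := hq.1
  have hE := E4_pos h0
  have dr := rho_deriv h0 h1
  have dP := ramr2 h0 h1
  have dQ := ramr4 h0 h1
  obtain ⟨b0, b1⟩ := z1_bounds hq
  have d := (ss_deriv h0 h1).mul ((((uu_deriv hx hq 2).mul (dr.pow 2)).add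
    ((uu_deriv hx hq 1).mul ((((dP.mul dr).neg.div_const 6).sub (dQ.div_const 2)).add
      ((dr.pow 2).const_mul (2 / 3))))).add
    ((uu_deriv hx hq 0).mul (((((dP.pow 2).div_const 72).sub ((dP.mul dr).div_const 36)).add
      ((dr.pow 2).div_const 12)).sub (dQ.const_mul (5 / 72)))))
  refine HasDerivAt.congr_deriv (f := V2 x) d ?_
  simp only [Pi.mul_apply, Pi.sub_apply, Pi.add_apply, Pi.neg_apply, Pi.pow_apply]
  have hz : z1 q = 1 - rho q ^ 2 / E4 q := by
    rw [z1_eq h0 h1, rho]; field_simp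
  have hR : E6 q = rho q * E4 q := by rw [rho]; field_simp
  rw [V3, ← fk_ode hx b0 b1]
  change _ = ss q * E6 q * (uu x 3 q - z1 q * (uu x 3 q + 3 / 2 * uu x 2 q + 23 / 36 * uu x 1 q + 5 / 72 * uu x 0 q)) / q
  rw [hz, hR]
  field_simp
  ring

lemma const_of_deriv {f : ℝ → ℝ} {c : ℝ} (hf : ∀ q ∈ U, HasDerivAt f 0 q)
    (hc : Tendsto f (𝓝[>] 0) (𝓝 c)) : ∀ q ∈ U, f q = c := by
  intro q hq
  have hU : U ∈ 𝓝[>] (0 : ℝ) := Ioo_mem_nhdsGT (Real.exp_pos _)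
  have hcon : ∀ t ∈ U, f t = f q := fun t ht =>
    isOpen_Ioo.is_const_of_deriv_eq_zero (isPreconnected_Ioo)
      (fun y hy => (hf y hy).differentiableAt.differentiableWithinAt) (fun y hy => (hf y hy).deriv) ht hq
  have : Tendsto f (𝓝[>] 0) (𝓝 (f q)) :=
    tendsto_const_nhds.congr' (by filter_upwards [hU] with t ht using (hcon t ht).symm)
  exact tendsto_nhds_unique this hc

lemma tend_ps {a : ℕ → ℝ} (ha : PolyB a) : Tendsto (ps ℝ a) (𝓝[>] 0) (𝓝 (a 0)) :=
  (ps_tendsto ha (𝕜 := ℝ)).mono_left nhdsWithin_le_nhds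

lemma U_mem : U ∈ 𝓝[>] (0 : ℝ) := Ioo_mem_nhdsGT (Real.exp_pos _)

lemma tE2 : Tendsto E2r (𝓝[>] 0) (𝓝 1) := by simpa [a2_zero] using! tend_ps pa2
lemma tE4 : Tendsto E4 (𝓝[>] 0) (𝓝 1) := by
  have := tend_ps pa4
  rw [a4_zero] at this
  exact this.congr' (by filter_upwards [U_mem] with t ht using (E4_eq ht.1 (ht.2.trans q0_lt_one)).symm)
lemma tE6 : Tendsto E6 (𝓝[>] 0) (𝓝 1) := by
  have := tend_ps pa6
  rw [a6_zero] at this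
  exact this.congr' (by filter_upwards [U_mem] with t ht using (E6_eq ht.1 (ht.2.trans q0_lt_one)).symm)
lemma trho : Tendsto rho (𝓝[>] 0) (𝓝 1) := by
  simpa using! tE6.div tE4 one_ne_zero
lemma tss : Tendsto ss (𝓝[>] 0) (𝓝 1) := by
  have := (tE4.sqrt).inv₀ (by simp)
  simpa using! this
lemma tz1 : Tendsto z1 (𝓝[>] 0) (𝓝 0) := by
  have := ((tE6.pow 2).div (tE4.pow 3) (by simp)).const_sub 1
  have h2 : Tendsto (fun q => 1 - E6 q ^ 2 / E4 q ^ 3) (𝓝[>] 0) (𝓝 0) := by simpa using! this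
  exact h2.congr' (by filter_upwards [U_mem] with t ht using (z1_eq ht.1 (ht.2.trans q0_lt_one)).symm)

lemma tuu (k : ℕ) : Tendsto (uu 0 k) (𝓝[>] 0) (𝓝 (hk 0 k 0)) := by
  have h := (ps_tendsto (phk le_rfl k) (𝕜 := ℝ)).comp tz1
  refine h.congr fun q => ?_
  simp [uu, fk]

lemma V0_zero_eq : ∀ q ∈ U, V0 0 q = 1 := by
  have t0 := tuu 0
  have t1 := tuu 1
  have t2 := tuu 2
  simp only [hk, cf_zero] at t0 t1 t2
  norm_num at t0 t1 t2
  have a2 : ∀ q ∈ U, V2 0 q = 0 := by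
    refine const_of_deriv (fun q hq => by simpa [V3] using V2_deriv le_rfl hq) ?_
    have := tss.mul (((t2.mul (trho.pow 2)).add (t1.mul ((((tE2.mul trho).neg.div_const 6).sub
      (tE4.div_const 2)).add ((trho.pow 2).const_mul (2 / 3))))).add
      (t0.mul (((((tE2.pow 2).div_const 72).sub ((tE2.mul trho).div_const 36)).add
      ((trho.pow 2).div_const 12)).sub (tE4.const_mul (5 / 72)))))
    norm_num at this
    exact this
  have a1 : ∀ q ∈ U, V1 0 q = 0 := by
    refine const_of_deriv (fun q hq => by simpa [a2 q hq] using V1_deriv le_rfl hq) ?_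
    have := tss.mul ((t1.mul trho).sub (((tE2.sub trho).div_const 6).mul t0))
    norm_num at this
    exact this
  refine const_of_deriv (fun q hq => by simpa [a1 q hq] using V0_deriv le_rfl hq) ?_
  have := tss.mul t0
  norm_num at this
  exact this

lemma qDeriv_eq {f g g' : ℝ → ℝ} (h : ∀ q ∈ U, f q = g q)
    (hg : ∀ q ∈ U, HasDerivAt g (g' q / q) q) : ∀ q ∈ U, qDeriv f q = g' q := by
  intro q hq
  have e : f =ᶠ[𝓝 q] g := by
    filter_upwards [isOpen_Ioo.mem_nhds hq] with t ht using h t ht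
  have h0 : q ≠ 0 := hq.1.ne'
  rw [qDeriv, ((hg q hq).congr_of_eventuallyEq e).deriv]
  field_simp

theorem stmt_13 :
    ∀ q ∈ Set.Ioo (0 : ℝ) (Real.exp (-2 * π)),
      (0 < z1 q ∧ z1 q < 1) ∧
      qDeriv (qDeriv (qDeriv (fun t => F1 (1 / 2) (z1 t) / F1 0 (z1 t)))) q =
        3 * Real.sqrt 3 * etaQ q ^ 12 * E6 q / E4 q ^ 2 := by
  intro q hq
  refine ⟨z1_bounds hq, ?_⟩
  have hx : (0 : ℝ) ≤ 1 / 2 := by norm_num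
  have e0 : ∀ t ∈ U, F1 (1 / 2) (z1 t) / F1 0 (z1 t) = V0 (1 / 2) t := by
    intro t ht
    have hz := (z1_bounds ht).1
    have h1 := V0_zero_eq t ht
    rw [F1_eq hz, F1_eq hz, V0]
    rw [V0] at h1
    change uu (1 / 2) 0 t / uu 0 0 t = _
    have hne : uu 0 0 t ≠ 0 := by
      intro h; rw [h] at h1; simp at h1
    rw [div_eq_iff hne]
    linear_combination (-uu (1 / 2) 0 t) * h1
  have e1 := qDeriv_eq e0 (fun q hq => V0_deriv hx hq)
  have e2 := qDeriv_eq e1 (fun q hq => V1_deriv hx hq)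
  have e3 := qDeriv_eq e2 (fun q hq => V2_deriv hx hq)
  rw [e3 q hq, V3]
  have hE := E4_pos hq.1
  have hη := etaQ_pos hq.1 (hq.2.trans q0_lt_one)
  have hs : 0 < √(E4 q) := Real.sqrt_pos.mpr hE
  have h2 : √(E4 q) ^ 2 = E4 q := Real.sq_sqrt hE.le
  have h3 : √(3 : ℝ) ^ 2 = 3 := Real.sq_sqrt (by norm_num)
  have hz : z1 q ^ ((1 : ℝ) / 2) = 24 * √3 * etaQ q ^ 12 / √(E4 q) ^ 3 := by
    rw [← Real.sqrt_eq_rpow, Real.sqrt_eq_iff_mul_self_eq_of_pos (by positivity), z1, ← h2]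
    field_simp
    rw [h3, h2]
    ring
  rw [hz, ss]
  rw [show E4 q ^ 2 = √(E4 q) ^ 4 by rw [show √(E4 q) ^ 4 = (√(E4 q) ^ 2) ^ 2 by ring, h2]]
  field_simp
  ring
end Hyp
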